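/- Let A = [0,1] × [−1,1] ⊆ ℝ² and let ε > 0. Then there exist a map f : ℝ² → ℝ² and an open set O ⊆ A such that: (1) f maps A bijectively onto A and the pushforward under f of Lebesgue measure restricted to A equals Lebesgue measure restricted to A; (2) f is C^∞ on the interior of A; (3) there is an open neighborhood U of the topological boundary of A with f(x) = x for all x ∈ U ∩ A; (4) O is symmetric about the x-axis, i.e. (x,y) ∈ O if and only if (x,−y) ∈ O; (5) the Lebesgue measure of O is greater than 2 − ε; (6) every point of the topological boundary of O lies at distance less than ε from the topological boundary of A; and (7) f maps {(x,y) ∈ O : y > 0} onto {(x,y) ∈ O : y < 0}. -/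

import Mathlib

/-!
The open unit disc and the open rectangle `(0,1) × (-1,1)` are related by an explicit chart of
constant Jacobian: a point of abscissa `sin t` is sent to the abscissa given by the normalised
area `(t + sin t cos t) / π + 1 / 2` of the part of the disc on its left, while its ordinate is
divided by the half-length `cos t` of the vertical chord through it (`toDisc`, `ofDisc`). The chart
commutes with the reflection `y ↦ -y`.

On the disc, a twist that rotates each circle of squared radius `s` through an angle `φ s` is smooth
and has Jacobian `1` (`det_fderiv_twist`). Conjugating it by the chart gives an area-preserving
diffeomorphism of the open rectangle (`det_fderiv_swap`, `measurePreserving_swap`). The profile `φ`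
is taken equal to `π` for `s ≤ a` and to `0` for `s ≥ b`, where `a < b < 1`: the conjugated map is
then the central symmetry `(x, y) ↦ (1 - x, -y)` on the set `O` corresponding to the disc `s < a`,
and the identity near the boundary of the rectangle. By compactness, `a` close to `1` makes `O`
contain any prescribed closed rectangle inside the open one, which gives the bounds on the measure
and on the boundary of `O`.
-/

open MeasureTheory

/-- The rectangle `A = [0,1] × [−1,1] ⊆ ℝ²`. -/
def rectA : Set (ℝ × ℝ) := Set.Icc (0 : ℝ) 1 ×ˢ Set.Icc (-1 : ℝ) 1

open Real Set

namespace RectSwap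

/-- The open rectangle, which is the interior of `rectA`. -/
def openRect : Set (ℝ × ℝ) := Ioo (0 : ℝ) 1 ×ˢ Ioo (-1 : ℝ) 1

theorem interior_rectA : interior rectA = openRect := by
  rw [rectA, openRect, interior_prod_eq, interior_Icc, interior_Icc]

theorem isOpen_openRect : IsOpen openRect := isOpen_Ioo.prod isOpen_Ioo

theorem openRect_subset : openRect ⊆ rectA := interior_rectA ▸ interior_subset

theorem isClosed_rectA : IsClosed rectA := 
  isClosed_Icc.prod isClosed_Icc

/-- The squared Euclidean norm on `ℝ × ℝ`. -/
def normSq (q : ℝ × ℝ) : ℝ := q.1 ^ 2 + q.2 ^ 2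

theorem contDiff_normSq : ContDiff ℝ (⊤ : ℕ∞) normSq := by
  unfold normSq; fun_prop

/-! ### The area-preserving chart from the rectangle to the disc -/

/-- The fraction of the area of the unit disc lying to the left of the abscissa `sin t`,
for `t ∈ [-π/2, π/2]`. -/
noncomputable def area (t : ℝ) : ℝ := (t + sin t * cos t) / π + 1 / 2

theorem contDiff_area : ContDiff ℝ (⊤ : ℕ∞) area := by
  unfold area; fun_prop

theorem hasDerivAt_area (t : ℝ) : HasDerivAt area (2 * cos t ^ 2 / π) t := by
  have h := (((hasDerivAt_id t).add ((hasDerivAt_sin t).mul (hasDerivAt_cos t))).div_const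
    π).add_const (1 / 2)
  refine h.congr_deriv ?_
  congr 1
  linear_combination - sin_sq_add_cos_sq t

theorem strictMono_area : StrictMono area := by
  intro s t hst
  have h1 : sin s * cos s - sin t * cos t = - (cos (t + s) * sin (t - s)) := by
    rw [cos_add, sin_sub]
    linear_combination (- sin s * cos s) * sin_sq_add_cos_sq t
      + (sin t * cos t) * sin_sq_add_cos_sq s
  have h2 : |sin (t - s)| < t - s := by
    have hp : 0 < t - s := sub_pos.2 hst
    refine abs_lt.2 ⟨?_, sin_lt hp⟩
    rcases le_or_gt (t - s) π with h | h
    · linarith [sin_nonneg_of_nonneg_of_le_pi hp.le h]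
    · linarith [neg_one_le_sin (t - s), pi_gt_three]
  have h3 : |cos (t + s) * sin (t - s)| ≤ |sin (t - s)| := by
    rw [abs_mul]
    exact mul_le_of_le_one_left (abs_nonneg _) (abs_cos_le_one _)
  have h4 := neg_abs_le (cos (t + s) * sin (t - s))
  have h5 : s + sin s * cos s < t + sin t * cos t := by linarith
  unfold area
  gcongr

theorem surjective_area : Function.Surjective area := by
  refine contDiff_area.continuous.surjective ?_ ?_
  · have : Filter.Tendsto (fun t : ℝ => (t + -1) / π + 1 / 2) Filter.atTop Filter.atTop :=
      Filter.tendsto_atTop_add_const_right _ _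
        ((Filter.tendsto_atTop_add_const_right _ _ Filter.tendsto_id).atTop_div_const pi_pos)
    refine Filter.tendsto_atTop_mono (fun t => ?_) this
    unfold area
    gcongr
    nlinarith [sin_sq_add_cos_sq t, sq_nonneg (sin t + cos t)]
  · have : Filter.Tendsto (fun t : ℝ => (t + 1) / π + 1 / 2) Filter.atBot Filter.atBot :=
      Filter.tendsto_atBot_add_const_right _ _
        ((Filter.tendsto_atBot_add_const_right _ _ Filter.tendsto_id).atBot_div_const pi_pos)
    refine Filter.tendsto_atBot_mono (fun t => ?_) this
    unfold area
    gcongr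
    nlinarith [sin_sq_add_cos_sq t, sq_nonneg (sin t - cos t)]

/-- `area` as an order isomorphism of the line. -/
noncomputable def areaIso : ℝ ≃o ℝ := StrictMono.orderIsoOfSurjective area strictMono_area surjective_area

theorem areaIso_apply (t : ℝ) : areaIso t = area t := rfl

/-- The inverse function of `area`. -/
noncomputable def angle (u : ℝ) : ℝ := areaIso.symm u

theorem area_angle (u : ℝ) : area (angle u) = u := areaIso.apply_symm_apply u

theorem angle_area (t : ℝ) : angle (area t) = t := areaIso.symm_apply_apply t

theorem continuous_angle : Continuous angle := areaIso.symm.continuous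

theorem area_mem_Ioo_iff {t : ℝ} : area t ∈ Ioo (0 : ℝ) 1 ↔ t ∈ Ioo (-(π / 2)) (π / 2) := by
  have h0 : area (-(π / 2)) = 0 := by
    unfold area; simp; field_simp; norm_num
  have h1 : area (π / 2) = 1 := by
    unfold area; simp; field_simp; norm_num
  rw [mem_Ioo, mem_Ioo, ← h0, ← h1, strictMono_area.lt_iff_lt, strictMono_area.lt_iff_lt]

theorem cos_angle_pos {u : ℝ} (hu : u ∈ Ioo (0 : ℝ) 1) : 0 < cos (angle u) := by
  apply cos_pos_of_mem_Ioo
  rwa [← area_mem_Ioo_iff, area_angle]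

theorem angle_one_sub (u : ℝ) : angle (1 - u) = - angle u := by
  apply strictMono_area.injective
  rw [area_angle]
  nth_rewrite 1 [← area_angle u]
  unfold area
  simp
  ring

theorem contDiffAt_angle {u : ℝ} (hu : u ∈ Ioo (0 : ℝ) 1) :
    ContDiffAt ℝ (⊤ : ℕ∞) angle u := by
  have hc := cos_angle_pos hu
  refine areaIso.toHomeomorph.toOpenPartialHomeomorph.contDiffAt_symm_deriv
    (f₀' := 2 * cos (angle u) ^ 2 / π) (by positivity) (mem_univ u) (hasDerivAt_area _)
    contDiff_area.contDiffAt

theorem hasDerivAt_angle {u : ℝ} (hu : u ∈ Ioo (0 : ℝ) 1) :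
    HasDerivAt angle (2 * cos (angle u) ^ 2 / π)⁻¹ u := by
  have hc := cos_angle_pos hu
  exact HasDerivAt.of_local_left_inverse continuous_angle.continuousAt (hasDerivAt_area _)
    (by positivity) (Filter.Eventually.of_forall area_angle)

/-- The chart from the open rectangle to the open unit disc; it multiplies area by `π / 2`. -/
noncomputable def toDisc (p : ℝ × ℝ) : ℝ × ℝ := (sin (angle p.1), p.2 * cos (angle p.1))

/-- The inverse chart from the open unit disc to the open rectangle. -/
noncomputable def ofDisc (q : ℝ × ℝ) : ℝ × ℝ := (area (arcsin q.1), q.2 / √(1 - q.1 ^ 2))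

theorem continuous_toDisc : Continuous toDisc := by
  have := continuous_angle
  unfold toDisc; fun_prop

theorem normSq_toDisc {p : ℝ × ℝ} (hp : p ∈ openRect) : normSq (toDisc p) < 1 := by
  obtain ⟨h1, h2, h3⟩ := hp
  have hc := cos_angle_pos h1
  have : p.2 ^ 2 < 1 := by nlinarith
  simp only [normSq, toDisc]
  nlinarith [sin_sq_add_cos_sq (angle p.1), mul_pos (sub_pos.2 this) (pow_pos hc 2)]

theorem ofDisc_mem {q : ℝ × ℝ} (hq : normSq q < 1) : ofDisc q ∈ openRect := by
  unfold normSq at hq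
  have h1 : 0 < 1 - q.1 ^ 2 := by nlinarith [sq_nonneg q.2]
  have hs := sqrt_pos.2 h1
  refine ⟨area_mem_Ioo_iff.2 ⟨?_, ?_⟩, ?_⟩
  · rw [neg_pi_div_two_lt_arcsin]; nlinarith
  · rw [arcsin_lt_pi_div_two]; nlinarith
  · have : |q.2| < √(1 - q.1 ^ 2) := by
      rw [← sqrt_sq_eq_abs]; exact sqrt_lt_sqrt (sq_nonneg _) (by linarith)
    rw [mem_Ioo, ← abs_lt]
    simp only [ofDisc]
    rwa [abs_div, abs_of_pos hs, div_lt_one hs]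

theorem ofDisc_toDisc {p : ℝ × ℝ} (hp : p ∈ openRect) : ofDisc (toDisc p) = p := by
  have hc := cos_angle_pos hp.1
  have ht : angle p.1 ∈ Ioo (-(π / 2)) (π / 2) := by
    rw [← area_mem_Ioo_iff, area_angle]; exact hp.1
  have hs : √(1 - sin (angle p.1) ^ 2) = cos (angle p.1) :=
    (cos_eq_sqrt_one_sub_sin_sq ht.1.le ht.2.le).symm
  ext
  · simp only [ofDisc, toDisc]
    rw [arcsin_sin ht.1.le ht.2.le, area_angle]
  · simp only [ofDisc, toDisc]
    rw [hs]; field_simp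

theorem toDisc_ofDisc {q : ℝ × ℝ} (hq : normSq q < 1) : toDisc (ofDisc q) = q := by
  unfold normSq at hq
  have h1 : 0 < 1 - q.1 ^ 2 := by nlinarith [sq_nonneg q.2]
  have hs := sqrt_pos.2 h1
  ext
  · simp only [ofDisc, toDisc, angle_area]
    exact sin_arcsin (by nlinarith) (by nlinarith)
  · simp only [ofDisc, toDisc, angle_area, cos_arcsin]
    field_simp

theorem contDiffAt_toDisc {p : ℝ × ℝ} (hp : p ∈ openRect) :
    ContDiffAt ℝ (⊤ : ℕ∞) toDisc p := by
  have h : ContDiffAt ℝ (⊤ : ℕ∞) (fun p : ℝ × ℝ => angle p.1) p :=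
    (contDiffAt_angle hp.1).comp p contDiffAt_fst
  exact (contDiff_sin.contDiffAt.comp p h).prodMk
    (contDiffAt_snd.mul (contDiff_cos.contDiffAt.comp p h))

theorem contDiffAt_ofDisc {q : ℝ × ℝ} (hq : normSq q < 1) :
    ContDiffAt ℝ (⊤ : ℕ∞) ofDisc q := by
  unfold normSq at hq
  have h1 : 0 < 1 - q.1 ^ 2 := by nlinarith [sq_nonneg q.2]
  have h2 : ContDiffAt ℝ (⊤ : ℕ∞) (fun q : ℝ × ℝ => arcsin q.1) q :=
    (contDiffAt_arcsin (by nlinarith) (by nlinarith)).comp q contDiffAt_fst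
  have h3 : ContDiffAt ℝ (⊤ : ℕ∞) (fun q : ℝ × ℝ => √(1 - q.1 ^ 2)) q :=
    ContDiffAt.sqrt (by fun_prop) h1.ne'
  exact (contDiff_area.contDiffAt.comp q h2).prodMk
    (contDiffAt_snd.div h3 (sqrt_pos.2 h1).ne')

theorem measurable_ofDisc : Measurable ofDisc := by
  have h := contDiff_area.continuous.measurable
  have h2 := measurable_arcsin
  unfold ofDisc; fun_prop

/-! ### Jacobian determinants in the plane -/

/-- The endomorphism of `ℝ × ℝ` with matrix `!![a, b; c, d]`. -/
noncomputable def planeMap (a b c d : ℝ) : ℝ × ℝ →L[ℝ] ℝ × ℝ :=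
  (a • ContinuousLinearMap.fst ℝ ℝ ℝ + b • ContinuousLinearMap.snd ℝ ℝ ℝ).prod
    (c • ContinuousLinearMap.fst ℝ ℝ ℝ + d • ContinuousLinearMap.snd ℝ ℝ ℝ)

theorem det_planeMap (a b c d : ℝ) : (planeMap a b c d).det = a * d - b * c := by
  have h : LinearMap.toMatrix (Module.Basis.finTwoProd ℝ) (Module.Basis.finTwoProd ℝ)
      (planeMap a b c d : ℝ × ℝ →ₗ[ℝ] ℝ × ℝ) = !![a, b; c, d] := by
    ext i j
    fin_cases i <;> fin_cases j <;> simp [planeMap, LinearMap.toMatrix_apply]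
  rw [ContinuousLinearMap.det, ← LinearMap.det_toMatrix (Module.Basis.finTwoProd ℝ), h,
    Matrix.det_fin_two_of]

theorem det_fderiv_toDisc {p : ℝ × ℝ} (hp : p ∈ openRect) :
    (fderiv ℝ toDisc p).det = π / 2 := by
  have hc := cos_angle_pos hp.1
  set d := (2 * cos (angle p.1) ^ 2 / π)⁻¹ with hd
  have hg : HasFDerivAt (fun p : ℝ × ℝ => angle p.1) (d • ContinuousLinearMap.fst ℝ ℝ ℝ) p :=
    (hasDerivAt_angle hp.1).comp_hasFDerivAt p hasFDerivAt_fst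
  have h : HasFDerivAt toDisc
      (planeMap (cos (angle p.1) * d) 0 (-(p.2 * sin (angle p.1) * d)) (cos (angle p.1))) p := by
    have := hg.sin.prodMk (hasFDerivAt_snd.mul hg.cos)
    refine this.congr_fderiv ?_
    ext <;> simp [planeMap]
    ring
  rw [h.fderiv, det_planeMap, hd]
  field_simp
  ring

/-! ### Twists of the disc -/

/-- The map that rotates the circle of squared radius `s` through the angle `φ s`. -/
noncomputable def twist (φ : ℝ → ℝ) (q : ℝ × ℝ) : ℝ × ℝ :=
  (q.1 * cos (φ (normSq q)) - q.2 * sin (φ (normSq q)),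
    q.1 * sin (φ (normSq q)) + q.2 * cos (φ (normSq q)))

theorem normSq_twist (φ : ℝ → ℝ) (q : ℝ × ℝ) : normSq (twist φ q) = normSq q := by
  have : normSq (twist φ q) = normSq q * (sin (φ (normSq q)) ^ 2 + cos (φ (normSq q)) ^ 2) := by
    simp only [twist, normSq]; ring
  rw [this, sin_sq_add_cos_sq, mul_one]

theorem twist_twist_neg (φ : ℝ → ℝ) (q : ℝ × ℝ) :
    twist (fun s => - φ s) (twist φ q) = q := by
  have h := sin_sq_add_cos_sq (φ (normSq q))
  rw [twist, normSq_twist]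
  ext
  · simp only [twist, cos_neg, sin_neg]
    linear_combination q.1 * h
  · simp only [twist, cos_neg, sin_neg]
    linear_combination q.2 * h

theorem contDiff_twist {φ : ℝ → ℝ} (hφ : ContDiff ℝ (⊤ : ℕ∞) φ) :
    ContDiff ℝ (⊤ : ℕ∞) (twist φ) := by
  have := hφ.comp contDiff_normSq
  unfold twist
  exact ((contDiff_fst.mul this.cos).sub (contDiff_snd.mul this.sin)).prodMk
    ((contDiff_fst.mul this.sin).add (contDiff_snd.mul this.cos))

theorem det_fderiv_twist {φ : ℝ → ℝ} (hφ : ContDiff ℝ (⊤ : ℕ∞) φ) (q : ℝ × ℝ) :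
    (fderiv ℝ (twist φ) q).det = 1 := by
  set s := sin (φ (normSq q)) with hs
  set c := cos (φ (normSq q)) with hc
  set d := deriv φ (normSq q) with hd
  have hN : HasFDerivAt normSq ((2 * q.1) • ContinuousLinearMap.fst ℝ ℝ ℝ +
      (2 * q.2) • ContinuousLinearMap.snd ℝ ℝ ℝ) q := by
    have := (hasFDerivAt_fst (𝕜 := ℝ) (p := q)).pow 2 |>.add
      ((hasFDerivAt_snd (𝕜 := ℝ) (p := q)).pow 2)
    refine this.congr_fderiv ?_
    ext <;> simp
  have hg : HasFDerivAt (fun q => φ (normSq q)) (d • ((2 * q.1) • ContinuousLinearMap.fst ℝ ℝ ℝ +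
      (2 * q.2) • ContinuousLinearMap.snd ℝ ℝ ℝ)) q :=
    ((hφ.differentiable (by simp)).differentiableAt.hasDerivAt).comp_hasFDerivAt q hN
  have h : HasFDerivAt (twist φ)
      (planeMap (c - (q.1 * s + q.2 * c) * (2 * q.1 * d)) (-s - (q.1 * s + q.2 * c) * (2 * q.2 * d))
        (s + (q.1 * c - q.2 * s) * (2 * q.1 * d)) (c + (q.1 * c - q.2 * s) * (2 * q.2 * d))) q := by
    have := ((hasFDerivAt_fst.mul hg.cos).sub (hasFDerivAt_snd.mul hg.sin)).prodMk
      ((hasFDerivAt_fst.mul hg.sin).add (hasFDerivAt_snd.mul hg.cos))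
    refine this.congr_fderiv ?_
    ext <;> simp [planeMap, ← hs, ← hc] <;> ring
  rw [h.fderiv, det_planeMap]
  linear_combination sin_sq_add_cos_sq (φ (normSq q))

/-! ### The swap map -/

open Classical in
/-- The twist with profile `φ`, transported to the open rectangle by the chart and extended by
the identity. -/
noncomputable def swap (φ : ℝ → ℝ) (p : ℝ × ℝ) : ℝ × ℝ :=
  if p ∈ openRect then ofDisc (twist φ (toDisc p)) else p

theorem swap_of_mem (φ : ℝ → ℝ) {p : ℝ × ℝ} (hp : p ∈ openRect) :
    swap φ p = ofDisc (twist φ (toDisc p)) := if_pos hp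

theorem swap_of_notMem (φ : ℝ → ℝ) {p : ℝ × ℝ} (hp : p ∉ openRect) : swap φ p = p := if_neg hp

theorem normSq_twist_toDisc (φ : ℝ → ℝ) {p : ℝ × ℝ} (hp : p ∈ openRect) :
    normSq (twist φ (toDisc p)) < 1 := by
  rw [normSq_twist]; exact normSq_toDisc hp

theorem swap_mem (φ : ℝ → ℝ) {p : ℝ × ℝ} (hp : p ∈ openRect) : swap φ p ∈ openRect := by
  rw [swap_of_mem φ hp]; exact ofDisc_mem (normSq_twist_toDisc φ hp)

theorem toDisc_swap (φ : ℝ → ℝ) {p : ℝ × ℝ} (hp : p ∈ openRect) :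
    toDisc (swap φ p) = twist φ (toDisc p) := by
  rw [swap_of_mem φ hp, toDisc_ofDisc (normSq_twist_toDisc φ hp)]

theorem swap_swap_neg (φ : ℝ → ℝ) (p : ℝ × ℝ) : swap (fun s => - φ s) (swap φ p) = p := by
  by_cases hp : p ∈ openRect
  · rw [swap_of_mem _ (swap_mem φ hp), toDisc_swap φ hp, twist_twist_neg, ofDisc_toDisc hp]
  · rw [swap_of_notMem φ hp, swap_of_notMem _ hp]

theorem swap_neg_swap (φ : ℝ → ℝ) (p : ℝ × ℝ) : swap φ (swap (fun s => - φ s) p) = p := by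
  simpa using swap_swap_neg (fun s => - φ s) p

theorem bijOn_swap_openRect (φ : ℝ → ℝ) : BijOn (swap φ) openRect openRect :=
  InvOn.bijOn (f' := swap fun s => - φ s)
    ⟨fun p _ => swap_swap_neg φ p, fun p _ => swap_neg_swap φ p⟩
    (fun _ hp => swap_mem φ hp) (fun _ hp => swap_mem _ hp)

theorem swap_mem_rectA (φ : ℝ → ℝ) {p : ℝ × ℝ} (hp : p ∈ rectA) : swap φ p ∈ rectA := by
  by_cases h : p ∈ openRect
  · exact openRect_subset (swap_mem φ h)
  · rwa [swap_of_notMem φ h]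

theorem bijOn_swap_rectA (φ : ℝ → ℝ) : BijOn (swap φ) rectA rectA :=
  InvOn.bijOn (f' := swap fun s => - φ s)
    ⟨fun p _ => swap_swap_neg φ p, fun p _ => swap_neg_swap φ p⟩
    (fun _ hp => swap_mem_rectA φ hp) (fun _ hp => swap_mem_rectA _ hp)

theorem contDiffAt_swap {φ : ℝ → ℝ} (hφ : ContDiff ℝ (⊤ : ℕ∞) φ) {p : ℝ × ℝ}
    (hp : p ∈ openRect) : ContDiffAt ℝ (⊤ : ℕ∞) (swap φ) p := by
  have h : ContDiffAt ℝ (⊤ : ℕ∞) (fun p => ofDisc (twist φ (toDisc p))) p :=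
    ContDiffAt.comp (g := ofDisc) (f := fun p => twist φ (toDisc p)) p
      (contDiffAt_ofDisc (normSq_twist_toDisc φ hp))
      ((contDiff_twist hφ).contDiffAt.comp p (contDiffAt_toDisc hp))
  refine h.congr_of_eventuallyEq ?_
  filter_upwards [isOpen_openRect.mem_nhds hp] with x hx using swap_of_mem φ hx

theorem measurable_swap {φ : ℝ → ℝ} (hφ : ContDiff ℝ (⊤ : ℕ∞) φ) : Measurable (swap φ) :=
  Measurable.ite isOpen_openRect.measurableSet
    (measurable_ofDisc.comp
      ((contDiff_twist hφ).continuous.measurable.comp continuous_toDisc.measurable))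
    measurable_id

/-- The chart has constant Jacobian, so it cancels out of the chain rule applied to the
conjugation relation `toDisc ∘ swap φ = twist φ ∘ toDisc`. -/
theorem det_fderiv_swap {φ : ℝ → ℝ} (hφ : ContDiff ℝ (⊤ : ℕ∞) φ) {p : ℝ × ℝ}
    (hp : p ∈ openRect) : (fderiv ℝ (swap φ) p).det = 1 := by
  have hS {x : ℝ × ℝ} (hx : x ∈ openRect) : HasFDerivAt toDisc (fderiv ℝ toDisc x) x :=
    ((contDiffAt_toDisc hx).differentiableAt (by simp)).hasFDerivAt
  have hf : HasFDerivAt (swap φ) (fderiv ℝ (swap φ) p) p :=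
    ((contDiffAt_swap hφ hp).differentiableAt (by simp)).hasFDerivAt
  have hR : HasFDerivAt (twist φ) (fderiv ℝ (twist φ) (toDisc p)) (toDisc p) :=
    ((contDiff_twist hφ).differentiable (by simp)).differentiableAt.hasFDerivAt
  have h1 := (hS (swap_mem φ hp)).comp p hf
  have h2 := hR.comp p (hS hp)
  have h3 : toDisc ∘ swap φ =ᶠ[nhds p] twist φ ∘ toDisc := by
    filter_upwards [isOpen_openRect.mem_nhds hp] with x hx using toDisc_swap φ hx
  have h4 := congrArg ContinuousLinearMap.det (h1.unique (h2.congr_of_eventuallyEq h3))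
  have hmul (L M : ℝ × ℝ →L[ℝ] ℝ × ℝ) : (L.comp M).det = L.det * M.det :=
    LinearMap.det_comp (L : ℝ × ℝ →ₗ[ℝ] ℝ × ℝ) M
  rw [hmul, hmul, det_fderiv_toDisc hp, det_fderiv_toDisc (swap_mem φ hp),
    det_fderiv_twist hφ] at h4
  have := pi_pos
  field_simp at h4
  linarith

theorem measurePreserving_swap {φ : ℝ → ℝ} (hφ : ContDiff ℝ (⊤ : ℕ∞) φ) :
    MeasurePreserving (swap φ) (volume.restrict rectA) (volume.restrict rectA) := by
  have hconv : Convex ℝ rectA := (convex_Icc _ _).prod (convex_Icc _ _)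
  have hae : volume.restrict rectA = volume.restrict openRect := by
    rw [← interior_rectA]
    exact (Measure.restrict_congr_set
      (interior_ae_eq_of_null_frontier (hconv.addHaar_frontier volume))).symm
  rw [hae]
  refine ⟨measurable_swap hφ, Measure.ext fun B hB => ?_⟩
  have hm := measurable_swap hφ hB
  rw [Measure.map_apply (measurable_swap hφ) hB, Measure.restrict_apply hm,
    Measure.restrict_apply hB]
  have himg : swap φ '' (swap φ ⁻¹' B ∩ openRect) = B ∩ openRect := by
    rw [image_preimage_inter, (bijOn_swap_openRect φ).image_eq]
  rw [← himg, ← lintegral_abs_det_fderiv_eq_addHaar_image volume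
    (hm.inter isOpen_openRect.measurableSet) (f' := fderiv ℝ (swap φ))
    (fun x hx => (((contDiffAt_swap hφ hx.2).differentiableAt
      (by simp)).hasFDerivAt).hasFDerivWithinAt)
    ((bijOn_swap_openRect φ).injOn.mono inter_subset_right)]
  rw [setLIntegral_congr_fun (g := fun _ => 1)
    (hm.inter isOpen_openRect.measurableSet) (fun x hx => by
      simp only [det_fderiv_swap hφ hx.2, abs_one, ENNReal.ofReal_one])]
  simp

/-- A twist through the angle `π` acts on the rectangle as its central symmetry. -/
theorem swap_of_eq_pi {φ : ℝ → ℝ} {p : ℝ × ℝ} (hp : p ∈ openRect)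
    (h : φ (normSq (toDisc p)) = π) : swap φ p = (1 - p.1, -p.2) := by
  have hp' : (1 - p.1, -p.2) ∈ openRect := by
    obtain ⟨⟨h1, h2⟩, h3, h4⟩ := hp
    exact ⟨⟨by linarith, by linarith⟩, by simpa using h4, by simpa using neg_lt.1 h3⟩
  rw [swap_of_mem φ hp, ← ofDisc_toDisc hp']
  congr 1
  rw [twist, h]
  simp [toDisc, angle_one_sub]

theorem swap_of_eq_zero {φ : ℝ → ℝ} {p : ℝ × ℝ} (h : φ (normSq (toDisc p)) = 0) :
    swap φ p = p := by
  by_cases hp : p ∈ openRect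
  · rw [swap_of_mem φ hp, twist, h]
    simpa using ofDisc_toDisc hp
  · exact swap_of_notMem φ hp

theorem normSq_toDisc_neg (x y : ℝ) : normSq (toDisc (x, -y)) = normSq (toDisc (x, y)) := by
  simp [normSq, toDisc]

/-! ### Choice of the radii -/

theorem isCompact_closedDisc (b : ℝ) : IsCompact {q : ℝ × ℝ | normSq q ≤ b} := by
  refine Metric.isCompact_of_isClosed_isBounded
    (isClosed_le contDiff_normSq.continuous continuous_const) ?_
  refine (Metric.isBounded_Icc ((-(1 + b), -(1 + b)) : ℝ × ℝ) (1 + b, 1 + b)).subset ?_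
  rintro ⟨x, y⟩ h
  simp only [normSq, mem_ofPred_eq] at h
  refine ⟨⟨?_, ?_⟩, ⟨?_, ?_⟩⟩ <;> simp only <;>
    nlinarith [sq_nonneg (x - 1), sq_nonneg (x + 1), sq_nonneg (y - 1), sq_nonneg (y + 1),
      sq_nonneg x, sq_nonneg y]

/-- A smooth twist profile that is `π` up to `a` and `0` from `b` on. -/
theorem exists_profile {a b : ℝ} (hab : a < b) :
    ∃ φ : ℝ → ℝ, ContDiff ℝ (⊤ : ℕ∞) φ ∧ (∀ s ≤ a, φ s = π) ∧ ∀ s, b ≤ s → φ s = 0 := by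
  have hd : 0 < b - a := sub_pos.2 hab
  refine ⟨fun s => π * (1 - smoothTransition ((s - a) / (b - a))), ?_, fun s hs => ?_,
    fun s hs => ?_⟩
  · exact contDiff_const.mul (contDiff_const.sub
      (smoothTransition.contDiff.comp ((contDiff_id.sub contDiff_const).div_const _)))
  · simp only
    rw [smoothTransition.zero_of_nonpos (div_nonpos_of_nonpos_of_nonneg (by linarith) hd.le)]
    simp
  · simp only
    rw [smoothTransition.one_of_one_le ((one_le_div hd).2 (by linarith))]
    simp

/-- The concentric closed rectangle at sup-distance `η` from the boundary of `rectA`. -/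
def innerRect (η : ℝ) : Set (ℝ × ℝ) := Icc η (1 - η) ×ˢ Icc (η - 1) (1 - η)

theorem innerRect_subset {η : ℝ} (hη : 0 < η) : innerRect η ⊆ openRect := by
  rintro ⟨x, y⟩ ⟨⟨h1, h2⟩, h3, h4⟩
  simp only at h1 h2 h3 h4
  exact ⟨⟨by simp only; linarith, by simp only; linarith⟩,
    by simp only; linarith, by simp only; linarith⟩

theorem exists_radius {η : ℝ} (hη : 0 < η) :
    ∃ a < 1, ∀ p ∈ innerRect η, normSq (toDisc p) < a := by
  rcases (innerRect η).eq_empty_or_nonempty with h | h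
  · exact ⟨0, one_pos, by simp [h]⟩
  · obtain ⟨m, hm, hmax⟩ := (isCompact_Icc.prod isCompact_Icc : IsCompact (innerRect η))
      |>.exists_isMaxOn h (contDiff_normSq.continuous.comp continuous_toDisc).continuousOn
    obtain ⟨a, ha, ha'⟩ := exists_between (normSq_toDisc (innerRect_subset hη hm))
    exact ⟨a, ha', fun p hp => (hmax hp).trans_lt ha⟩

theorem frontier_rectA : frontier rectA = rectA \ openRect := by
  rw [isClosed_rectA.frontier_eq, interior_rectA]

theorem infDist_lt_of_notMem_innerRect {η : ℝ} {p : ℝ × ℝ} (hp : p ∈ rectA)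
    (hn : p ∉ innerRect η) : Metric.infDist p (frontier rectA) < η := by
  obtain ⟨x, y⟩ := p
  have key (x' y' : ℝ) (hmem : (x', y') ∈ rectA) (hnot : (x', y') ∉ openRect)
      (hx : |x - x'| < η) (hy : |y - y'| < η) :
      Metric.infDist (x, y) (frontier rectA) < η := by
    have hfr : (x', y') ∈ frontier rectA := by
      rw [frontier_rectA]; exact ⟨hmem, hnot⟩
    refine (Metric.infDist_le_dist_of_mem hfr).trans_lt ?_
    rw [Prod.dist_eq]
    exact max_lt hx hy
  obtain ⟨⟨h1, h2⟩, h3, h4⟩ := hp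
  simp only at h1 h2 h3 h4
  by_cases c1 : x < η
  · have : 0 < η := h1.trans_lt c1
    exact key 0 y ⟨by simp, h3, h4⟩ (by simp [openRect]) (by rwa [sub_zero, abs_of_nonneg h1])
      (by simpa)
  by_cases c2 : 1 - η < x
  · have : 0 < η := by linarith
    exact key 1 y ⟨by simp, h3, h4⟩ (by simp [openRect])
      (by rw [abs_lt]; constructor <;> linarith) (by simpa)
  by_cases c3 : y < η - 1
  · have : 0 < η := by linarith
    exact key x (-1) ⟨⟨h1, h2⟩, by simp⟩ (by simp [openRect]) (by simpa)
      (by rw [abs_lt]; constructor <;> linarith)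
  by_cases c4 : 1 - η < y
  · have : 0 < η := by linarith
    exact key x 1 ⟨⟨h1, h2⟩, by simp⟩ (by simp [openRect]) (by simpa)
      (by rw [abs_lt]; constructor <;> linarith)
  exact absurd ⟨⟨not_lt.1 c1, not_lt.1 c2⟩, not_lt.1 c3, not_lt.1 c4⟩ hn

theorem volume_innerRect {η : ℝ} (hη : η ≤ 1 / 2) :
    volume (innerRect η) = ENNReal.ofReal ((1 - 2 * η) * (2 - 2 * η)) := by
  rw [innerRect, Measure.volume_eq_prod, Measure.prod_prod, Real.volume_Icc, Real.volume_Icc,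
    ← ENNReal.ofReal_mul (by linarith)]
  ring_nf

end RectSwap

open RectSwap in
/-- the smooth "swap" map on `A = [0,1] × [−1,1]`. -/
theorem stmt_5 (ε : ℝ) (hε : 0 < ε) :
    ∃ (f : ℝ × ℝ → ℝ × ℝ) (O : Set (ℝ × ℝ)),
      IsOpen O ∧ O ⊆ rectA ∧
      Set.BijOn f rectA rectA ∧
      MeasurePreserving f (volume.restrict rectA) (volume.restrict rectA) ∧
      ContDiffOn ℝ (⊤ : ℕ∞) f (interior rectA) ∧
      (∃ U : Set (ℝ × ℝ), IsOpen U ∧ frontier rectA ⊆ U ∧ ∀ x ∈ U ∩ rectA, f x = x) ∧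
      (∀ x y : ℝ, (x, y) ∈ O ↔ (x, -y) ∈ O) ∧
      ENNReal.ofReal (2 - ε) < volume O ∧
      (∀ p ∈ frontier O, Metric.infDist p (frontier rectA) < ε) ∧
      f '' {p : ℝ × ℝ | p ∈ O ∧ 0 < p.2} = {p : ℝ × ℝ | p ∈ O ∧ p.2 < 0} := by
  obtain ⟨η, hη, hη1, hη2⟩ : ∃ η : ℝ, 0 < η ∧ η ≤ 1 / 8 ∧ 8 * η ≤ ε :=
    ⟨min ε 1 / 8, by positivity, by linarith [min_le_right ε 1], by linarith [min_le_left ε 1]⟩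
  obtain ⟨a, ha1, ha⟩ := exists_radius hη
  obtain ⟨b, hab, hb1⟩ := exists_between ha1
  obtain ⟨φ, hφ, hφπ, hφ0⟩ := exists_profile hab
  set O : Set (ℝ × ℝ) := {p | p ∈ openRect ∧ normSq (toDisc p) < a} with hO
  have hOopen : IsOpen O := isOpen_openRect.inter
    (isOpen_lt (contDiff_normSq.continuous.comp continuous_toDisc) continuous_const)
  have hOsub : O ⊆ rectA := fun p hp => openRect_subset hp.1
  have hKO : innerRect η ⊆ O := fun p hp => ⟨innerRect_subset hη hp, ha p hp⟩
  have hsymm (x y : ℝ) (h : (x, y) ∈ O) : (x, -y) ∈ O := by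
    obtain ⟨⟨h1, h2, h3⟩, h4⟩ := h
    refine ⟨⟨h1, ?_, ?_⟩, ?_⟩
    · simpa using h3
    · simpa using neg_lt.1 h2
    · rwa [normSq_toDisc_neg]
  have hswap {p : ℝ × ℝ} (hp : p ∈ O) : swap φ p = (1 - p.1, -p.2) :=
    swap_of_eq_pi hp.1 (hφπ _ hp.2.le)
  -- The central symmetry preserves `O`, because the chart turns it into `-1` on the disc.
  have hcentral {p : ℝ × ℝ} (hp : p ∈ O) : (1 - p.1, -p.2) ∈ O := by
    rw [← hswap hp]
    refine ⟨swap_mem φ hp.1, ?_⟩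
    rw [toDisc_swap φ hp.1, normSq_twist]
    exact hp.2
  refine ⟨swap φ, O, hOopen, hOsub, bijOn_swap_rectA φ, measurePreserving_swap hφ, ?_, ?_, ?_, ?_,
    ?_, ?_⟩
  · rw [interior_rectA]
    exact fun p hp => (contDiffAt_swap hφ hp).contDiffWithinAt
  · -- Off the compact image of the disc of squared radius `b`, the twist angle vanishes.
    have hcpt : IsCompact (ofDisc '' {q | normSq q ≤ b}) :=
      (isCompact_closedDisc b).image_of_continuousOn fun q hq =>
        (contDiffAt_ofDisc (lt_of_le_of_lt hq hb1)).continuousAt.continuousWithinAt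
    refine ⟨(ofDisc '' {q | normSq q ≤ b})ᶜ, hcpt.isClosed.isOpen_compl, ?_, ?_⟩
    · rw [frontier_rectA]
      rintro p ⟨-, hp⟩ ⟨q, hq, rfl⟩
      exact hp (ofDisc_mem (lt_of_le_of_lt hq hb1))
    · rintro p ⟨hp, -⟩
      by_cases hpQ : p ∈ openRect
      · refine swap_of_eq_zero (hφ0 _ ?_)
        by_contra hlt
        exact hp ⟨toDisc p, (not_le.1 hlt).le, ofDisc_toDisc hpQ⟩
      · exact swap_of_notMem φ hpQ
  · exact fun x y => ⟨hsymm x y, fun h => by simpa using hsymm x (-y) h⟩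
  · refine lt_of_lt_of_le ?_ (measure_mono hKO)
    rw [volume_innerRect (by linarith), ENNReal.ofReal_lt_ofReal_iff (by nlinarith)]
    nlinarith
  · intro p hp
    rw [hOopen.frontier_eq] at hp
    have hpA : p ∈ rectA := closure_minimal hOsub isClosed_rectA hp.1
    have := infDist_lt_of_notMem_innerRect hpA fun h => hp.2 (hKO h)
    linarith
  · ext p
    constructor
    · rintro ⟨p, ⟨hp, hpos⟩, rfl⟩
      rw [hswap hp]
      exact ⟨hcentral hp, by simpa using hpos⟩
    · rintro ⟨hp, hneg⟩
      refine ⟨(1 - p.1, -p.2), ⟨hcentral hp, by simpa using hneg⟩, ?_⟩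
      rw [hswap (hcentral hp)]
      simp
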